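/- arXiv:1312.7815 — 9 statements merged into one kernel-verified Lean document; each statement's English description precedes it below -/
import Mathlib

section
/- Let f be continuous on [u, v] with u < v, and let ℓ be an affine function such that the error ε = f − ℓ has only finitely many zeros in [u, v], at each of which ε changes sign. Then ℓ minimizes ∫_u^v |f(x) − q(x)| dx over all affine functions q if and only if ∫_u^v sign(f(x) − ℓ(x)) · q(x) dx = 0 for every affine function q, where sign(t) = 1 for t > 0, sign(t) = −1 for t < 0, and sign(0) = 0. -/
/-- `ε` changes sign at `z` (relative to the interval `[u, v]`): on some punctured
neighbourhood of `z` intersected with `[u, v]`, `ε` is (strictly) positive on one side of `z`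
and (strictly) negative on the other side. -/
def ChangesSignAt (ε : ℝ → ℝ) (u v z : ℝ) : Prop :=
  ∃ δ > 0,
    ((∀ x ∈ Set.Ioo (z - δ) z ∩ Set.Icc u v, 0 < ε x) ∧
        (∀ x ∈ Set.Ioo z (z + δ) ∩ Set.Icc u v, ε x < 0)) ∨
      ((∀ x ∈ Set.Ioo (z - δ) z ∩ Set.Icc u v, ε x < 0) ∧
        (∀ x ∈ Set.Ioo z (z + δ) ∩ Set.Icc u v, 0 < ε x))

open MeasureTheory in
theorem hh_aux (u v : ℝ) (huv : u < v) (e : ℝ → ℝ) (he : ContinuousOn e (Set.Icc u v))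
    (hfin : {x ∈ Set.Icc u v | e x = 0}.Finite) :
    (∀ γ δ : ℝ, (∫ x in u..v, |e x|) ≤ ∫ x in u..v, |e x - (γ * x + δ)|) ↔
      (∀ γ δ : ℝ, (∫ x in u..v, Real.sign (e x) * (γ * x + δ)) = 0) := by
  have hu : Set.uIcc u v = Set.Icc u v := Set.uIcc_of_le huv.le
  have hsm : Measurable Real.sign := by
    unfold Real.sign
    exact Measurable.ite measurableSet_Iio measurable_const
      (Measurable.ite measurableSet_Ioi measurable_const measurable_const)
  have hem : AEStronglyMeasurable e (volume.restrict (Set.uIoc u v)) := by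
    rw [Set.uIoc_of_le huv.le]
    exact (he.mono Set.Ioc_subset_Icc_self).aestronglyMeasurable measurableSet_Ioc
  have hsem : AEStronglyMeasurable (fun x => Real.sign (e x)) (volume.restrict (Set.uIoc u v)) :=
    (hsm.comp_aemeasurable hem.aemeasurable).aestronglyMeasurable
  have hsb : ∀ y : ℝ, |Real.sign y| ≤ 1 := by
    intro y
    rcases Real.sign_apply_eq y with h | h | h <;> rw [h] <;> norm_num
  have hsint : ∀ γ δ : ℝ,
      IntervalIntegrable (fun x => Real.sign (e x) * (γ * x + δ)) volume u v := by
    intro γ δ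
    have hq : IntervalIntegrable (fun x : ℝ => γ * x + δ) volume u v :=
      Continuous.intervalIntegrable (by fun_prop) _ _
    refine hq.mono_fun (hsem.mul (by fun_prop)) ?_
    refine Filter.Eventually.of_forall fun x => ?_
    simp only [norm_mul, Real.norm_eq_abs]
    exact mul_le_of_le_one_left (abs_nonneg _) (hsb _)
  have hint : ∀ γ δ : ℝ, IntervalIntegrable (fun x => |e x - (γ * x + δ)|) volume u v := by
    intro γ δ
    apply ContinuousOn.intervalIntegrable
    rw [hu]
    exact (he.sub (by fun_prop)).abs
  have hint0 : IntervalIntegrable (fun x => |e x|) volume u v := by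
    apply ContinuousOn.intervalIntegrable
    rw [hu]
    exact he.abs
  constructor
  · intro hmin γ δ
    have hne : ∀ᵐ x ∂(volume : Measure ℝ), x ∈ Set.uIoc u v → e x ≠ 0 := by
      have h0 : ∀ᵐ x ∂(volume : Measure ℝ), x ∉ {x ∈ Set.Icc u v | e x = 0} :=
        measure_eq_zero_iff_ae_notMem.mp (hfin.measure_zero _)
      filter_upwards [h0] with x hx hxu h
      rw [Set.uIoc_of_le huv.le] at hxu
      exact hx ⟨Set.Ioc_subset_Icc_self hxu, h⟩
    have hmeas : ∀ t : ℝ, AEStronglyMeasurable (fun x => |e x - t * (γ * x + δ)|)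
        (volume.restrict (Set.uIoc u v)) := by
      intro t
      exact (hem.sub (by fun_prop)).norm
    have hD := (intervalIntegral.hasDerivAt_integral_of_dominated_loc_of_lip
      (μ := volume) (a := u) (b := v) (s := Set.univ) (x₀ := (0 : ℝ))
      (F := fun t x => |e x - t * (γ * x + δ)|)
      (F' := fun x => -(Real.sign (e x) * (γ * x + δ)))
      (bound := fun x => |γ * x + δ|) Filter.univ_mem
      (Filter.Eventually.of_forall hmeas) (by simpa using hint0)
      (hsem.mul (by fun_prop)).neg ?_
      (Continuous.intervalIntegrable (by fun_prop) _ _) ?_).2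
    · have hm : IsLocalMin (fun t : ℝ => ∫ x in u..v, |e x - t * (γ * x + δ)|) 0 := by
        refine Filter.Eventually.of_forall fun t => ?_
        have := hmin (t * γ) (t * δ)
        have h2 : ∀ x, t * γ * x + t * δ = t * (γ * x + δ) := fun x => by ring
        simpa [h2] using this
      have := hm.hasDerivAt_eq_zero hD
      rw [intervalIntegral.integral_neg] at this
      linarith
    · refine Filter.Eventually.of_forall fun x _ => ?_
      refine LipschitzOnWith.of_dist_le_mul fun s _ t _ => ?_
      rw [Real.dist_eq, Real.dist_eq, Real.coe_nnabs, abs_abs]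
      refine (abs_abs_sub_abs_le_abs_sub _ _).trans ?_
      rw [← abs_mul, ← abs_neg]
      apply le_of_eq
      congr 1
      ring
    · filter_upwards [hne] with x hx hxu
      have h1 : HasDerivAt (fun t : ℝ => e x - t * (γ * x + δ)) (-(γ * x + δ)) 0 := by
        simpa using ((hasDerivAt_id (0 : ℝ)).mul_const (γ * x + δ)).const_sub (e x)
      rcases lt_or_gt_of_ne (hx hxu) with h | h
      · rw [Real.sign_of_neg h]
        have h2 : HasDerivAt (fun y : ℝ => |y|) (-1) (e x - 0 * (γ * x + δ)) :=
          hasDerivAt_abs_neg (by simpa using h)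
        have h3 := h2.comp (0 : ℝ) h1
        refine h3.congr_deriv ?_
        ring
      · rw [Real.sign_of_pos h]
        have h2 : HasDerivAt (fun y : ℝ => |y|) 1 (e x - 0 * (γ * x + δ)) :=
          hasDerivAt_abs_pos (by simpa using h)
        have h3 := h2.comp (0 : ℝ) h1
        refine h3.congr_deriv ?_
        ring
  · intro h γ δ
    have h1 : (∫ x in u..v, (|e x| - Real.sign (e x) * (γ * x + δ)))
        ≤ ∫ x in u..v, |e x - (γ * x + δ)| := by
      refine intervalIntegral.integral_mono_on huv.le (hint0.sub (hsint γ δ)) (hint γ δ) ?_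
      intro x _
      rcases lt_trichotomy (e x) 0 with h | h | h
      · rw [Real.sign_of_neg h, abs_of_neg h]
        linarith [neg_abs_le (e x - (γ * x + δ))]
      · simp [h]
      · rw [Real.sign_of_pos h, abs_of_pos h]
        linarith [le_abs_self (e x - (γ * x + δ))]
    rw [intervalIntegral.integral_sub hint0 (hsint γ δ), h γ δ] at h1
    linarith

/-- **Kripke–Rivlin criterion.** Let `f` be continuous on `[u, v]` and `ℓ` affine such that
`ε = f - ℓ` has finitely many zeros in `[u, v]`, at each of which it changes sign. Then `ℓ` is
a best `L¹` affine approximation to `f` on `[u, v]` iff `∫_u^v sign(f - ℓ) q = 0` for every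
affine `q`. -/
theorem best_L1_affine_iff_sign_orthogonal (u v : ℝ) (huv : u < v) (f ℓ : ℝ → ℝ)
    (hf : ContinuousOn f (Set.Icc u v))
    (α β : ℝ) (hℓ : ∀ x, ℓ x = α * x + β)
    (hfin : {x ∈ Set.Icc u v | f x - ℓ x = 0}.Finite)
    (hsign : ∀ z ∈ Set.Icc u v, f z - ℓ z = 0 → ChangesSignAt (fun x => f x - ℓ x) u v z) :
    (∀ γ δ : ℝ, (∫ x in u..v, |f x - ℓ x|) ≤ ∫ x in u..v, |f x - (γ * x + δ)|) ↔
      (∀ γ δ : ℝ, (∫ x in u..v, Real.sign (f x - ℓ x) * (γ * x + δ)) = 0) := by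
  have hl : ContinuousOn ℓ (Set.Icc u v) := by
    have : ℓ = fun x => α * x + β := funext hℓ
    rw [this]
    fun_prop
  rw [← hh_aux u v huv (fun x => f x - ℓ x) (hf.sub hl) hfin]
  constructor
  · intro h γ δ
    refine (h (α + γ) (β + δ)).trans_eq ?_
    congr 1
    funext x
    rw [hℓ]
    ring_nf
  · intro h γ δ
    refine (h (γ - α) (δ - β)).trans_eq ?_
    congr 1
    funext x
    simp only [hℓ]
    ring_nf
end

section
/- Let C, b, c be real numbers with C ≠ 0, let f(x) = (C/2)x² + bx + c, let u < v, and let h = v − u. Then the affine function ℓ* determined by ℓ*(u + h/4) = f(u + h/4) and ℓ*(u + 3h/4) = f(u + 3h/4) is the unique minimizer of ∫_u^v |f(x) − ℓ(x)| dx over all affine functions ℓ. -/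
lemma quad_int (A B D a b : ℝ) : (∫ x in a..b, (A * x ^ 2 + B * x + D)) =
    A * (b ^ 3 - a ^ 3) / 3 + B * (b ^ 2 - a ^ 2) / 2 + D * (b - a) := by
  rw [intervalIntegral.integral_add, intervalIntegral.integral_add,
    intervalIntegral.integral_const_mul, intervalIntegral.integral_const_mul, integral_pow,
    integral_id, intervalIntegral.integral_const]
  · simp only [smul_eq_mul]; push_cast; ring
  all_goals exact Continuous.intervalIntegrable (by fun_prop) _ _

lemma quad_abs (s : ℝ) (hs : s = 1 ∨ s = -1) (A B D a b : ℝ) (hab : a < b) :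
    (s * (A * (b ^ 3 - a ^ 3) / 3 + B * (b ^ 2 - a ^ 2) / 2 + D * (b - a)) ≤
      ∫ x in a..b, |A * x ^ 2 + B * x + D|) ∧
    ((∫ x in a..b, |A * x ^ 2 + B * x + D|) ≤
      s * (A * (b ^ 3 - a ^ 3) / 3 + B * (b ^ 2 - a ^ 2) / 2 + D * (b - a)) →
      ∀ x ∈ Set.Icc a b, 0 ≤ s * (A * x ^ 2 + B * x + D)) ∧
    ((∀ x ∈ Set.Icc a b, 0 ≤ s * (A * x ^ 2 + B * x + D)) →
      (∫ x in a..b, |A * x ^ 2 + B * x + D|) =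
      s * (A * (b ^ 3 - a ^ 3) / 3 + B * (b ^ 2 - a ^ 2) / 2 + D * (b - a))) := by
  have hle : ∀ y : ℝ, s * y ≤ |y| := by
    intro y
    rcases hs with rfl | rfl
    · simpa using le_abs_self y
    · simpa using neg_le_abs y
  have heq : ∀ y : ℝ, 0 ≤ s * y → |y| = s * y := by
    intro y hy
    rcases hs with rfl | rfl
    · rw [one_mul] at hy ⊢; exact abs_of_nonneg hy
    · rw [neg_one_mul] at hy ⊢; exact abs_of_nonpos (by linarith)
  rw [← quad_int, ← intervalIntegral.integral_const_mul]
  refine ⟨?_, ?_, ?_⟩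
  · apply intervalIntegral.integral_mono_on hab.le
    · exact Continuous.intervalIntegrable (by fun_prop) _ _
    · exact Continuous.intervalIntegrable (by fun_prop) _ _
    · intro x _; exact hle _
  · intro h x hx
    by_contra hneg
    push Not at hneg
    refine absurd h (not_le.mpr ?_)
    apply intervalIntegral.integral_lt_integral_of_continuousOn_of_le_of_exists_lt hab
    · exact Continuous.continuousOn (by fun_prop)
    · exact Continuous.continuousOn (by fun_prop)
    · intro x _; exact hle _
    · exact ⟨x, hx, lt_of_lt_of_le hneg (abs_nonneg _)⟩
  · intro h
    apply intervalIntegral.integral_congr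
    intro x hx
    rw [Set.uIcc_of_le hab.le] at hx
    exact heq _ (h x hx)

/-- For a genuinely quadratic `f(x) = (C/2)x² + bx + c` (`C ≠ 0`) on `[u, v]`, the affine
function interpolating `f` at the canonical points `u + h/4` and `u + 3h/4` (`h = v - u`) is
the unique minimizer of `∫_u^v |f - ℓ|` over all affine functions `ℓ`. -/
theorem quadratic_best_L1_affine_unique (C b c u v : ℝ) (hC : C ≠ 0) (huv : u < v)
    (f ℓstar : ℝ → ℝ)
    (hf : ∀ x, f x = C / 2 * x ^ 2 + b * x + c)
    (α β : ℝ) (hℓ : ∀ x, ℓstar x = α * x + β)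
    (h1 : ℓstar (u + (v - u) / 4) = f (u + (v - u) / 4))
    (h2 : ℓstar (u + 3 * (v - u) / 4) = f (u + 3 * (v - u) / 4)) :
    (∀ γ δ : ℝ, (∫ x in u..v, |f x - ℓstar x|) ≤ ∫ x in u..v, |f x - (γ * x + δ)|) ∧
      (∀ γ δ : ℝ,
        (∫ x in u..v, |f x - (γ * x + δ)|) = (∫ x in u..v, |f x - ℓstar x|) →
        ∀ x, γ * x + δ = ℓstar x) := by
  obtain ⟨t, rfl⟩ : ∃ t, v = u + 4 * t := ⟨(v - u) / 4, by ring⟩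
  have ht : 0 < t := by linarith
  rw [hℓ, hf, show u + (u + 4 * t - u) / 4 = u + t by ring] at h1
  rw [hℓ, hf, show u + 3 * (u + 4 * t - u) / 4 = u + 3 * t by ring] at h2
  have hB : b - α = -(C / 2) * (2 * u + 4 * t) := by
    have : 2 * t * (b - α + C / 2 * (2 * u + 4 * t)) = 0 := by linear_combination h1 - h2
    rcases mul_eq_zero.mp this with h | h <;> linarith
  have hD : c - β = C / 2 * ((u + t) * (u + 3 * t)) := by
    linear_combination -h1 - (u + t) * hB
  obtain ⟨s, hs, hsC⟩ : ∃ s : ℝ, (s = 1 ∨ s = -1) ∧ 0 < s * (C / 2) := by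
    rcases lt_or_gt_of_ne hC with h | h
    · exact ⟨-1, Or.inr rfl, by linarith⟩
    · exact ⟨1, Or.inl rfl, by linarith⟩
  have hs' : -s = 1 ∨ -s = -1 := by
    rcases hs with rfl | rfl <;> simp
  have hsplit : ∀ γ δ : ℝ, (∫ x in u..(u + 4 * t), |f x - (γ * x + δ)|) =
      (∫ x in u..(u + t), |C / 2 * x ^ 2 + (b - γ) * x + (c - δ)|) +
      (∫ x in (u + t)..(u + 3 * t), |C / 2 * x ^ 2 + (b - γ) * x + (c - δ)|) +
      (∫ x in (u + 3 * t)..(u + 4 * t), |C / 2 * x ^ 2 + (b - γ) * x + (c - δ)|) := by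
    intro γ δ
    rw [intervalIntegral.integral_add_adjacent_intervals,
      intervalIntegral.integral_add_adjacent_intervals]
    · congr 1
      ext x
      rw [hf]
      congr 1
      ring
    all_goals exact Continuous.intervalIntegrable (by fun_prop) _ _
  have hfac : ∀ x, C / 2 * x ^ 2 + (b - α) * x + (c - β) =
      C / 2 * ((x - (u + t)) * (x - (u + 3 * t))) := by
    intro x; rw [hB, hD]; ring
  have l1 : u < u + t := by linarith
  have l2 : u + t < u + 3 * t := by linarith
  have l3 : u + 3 * t < u + 4 * t := by linarith
  have e1 := (quad_abs s hs (C / 2) (b - α) (c - β) _ _ l1).2.2 (by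
    intro x hx
    rw [hfac, ← mul_assoc]
    exact mul_nonneg hsC.le (mul_nonneg_of_nonpos_of_nonpos (by linarith [hx.2]) (by linarith [hx.2])))
  have e2 := (quad_abs (-s) hs' (C / 2) (b - α) (c - β) _ _ l2).2.2 (by
    intro x hx
    rw [hfac, ← mul_assoc, neg_mul, neg_mul, ← mul_neg, ← mul_neg]
    exact mul_nonneg hsC.le (mul_nonneg (by linarith [hx.1]) (by linarith [hx.2])))
  have e3 := (quad_abs s hs (C / 2) (b - α) (c - β) _ _ l3).2.2 (by
    intro x hx
    rw [hfac, ← mul_assoc]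
    exact mul_nonneg hsC.le (mul_nonneg (by linarith [hx.1]) (by linarith [hx.1])))
  simp only [hℓ]
  constructor
  · intro γ δ
    have k1 := (quad_abs s hs (C / 2) (b - γ) (c - δ) _ _ l1).1
    have k2 := (quad_abs (-s) hs' (C / 2) (b - γ) (c - δ) _ _ l2).1
    have k3 := (quad_abs s hs (C / 2) (b - γ) (c - δ) _ _ l3).1
    rw [hsplit, hsplit, e1, e2, e3]
    refine le_trans (le_of_eq ?_) (add_le_add (add_le_add k1 k2) k3)
    ring
  · intro γ δ h
    obtain ⟨k1, m1, -⟩ := quad_abs s hs (C / 2) (b - γ) (c - δ) _ _ l1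
    obtain ⟨k2, m2, -⟩ := quad_abs (-s) hs' (C / 2) (b - γ) (c - δ) _ _ l2
    obtain ⟨k3, m3, -⟩ := quad_abs s hs (C / 2) (b - γ) (c - δ) _ _ l3
    rw [hsplit, hsplit, e1, e2, e3] at h
    have n1 := m1 (by linarith)
    have n2 := m2 (by linarith)
    have n3 := m3 (by linarith)
    have hs0 : s ≠ 0 := by rcases hs with rfl | rfl <;> norm_num
    have z1 : C / 2 * (u + t) ^ 2 + (b - γ) * (u + t) + (c - δ) = 0 := by
      have a1 := n1 (u + t) ⟨l1.le, le_rfl⟩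
      have a2 := n2 (u + t) ⟨le_rfl, l2.le⟩
      exact (mul_eq_zero.mp (le_antisymm (by linarith) a1)).resolve_left hs0
    have z2 : C / 2 * (u + 3 * t) ^ 2 + (b - γ) * (u + 3 * t) + (c - δ) = 0 := by
      have a1 := n3 (u + 3 * t) ⟨le_rfl, l3.le⟩
      have a2 := n2 (u + 3 * t) ⟨l2.le, le_rfl⟩
      exact (mul_eq_zero.mp (le_antisymm (by linarith) a1)).resolve_left hs0
    have hγ : γ = α := by
      have : 2 * t * (γ - α) = 0 := by linear_combination z1 - z2 + h1 - h2
      rcases mul_eq_zero.mp this with h | h <;> linarith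
    subst hγ
    have hδ : δ = β := by linarith
    intro x
    rw [hδ]
end

section
/- Let C, b, c be real numbers, let f(x) = (C/2)x² + bx + c, let u < v, and let h = v − u. Then the minimum of ∫_u^v |f(x) − ℓ(x)| dx over all affine functions ℓ equals |C| · h³ / 32. -/
lemma aux_quad_integral (A B D s t : ℝ) :
    ∫ x in s..t, (A * x ^ 2 + B * x + D)
      = A * (t ^ 3 - s ^ 3) / 3 + B * (t ^ 2 - s ^ 2) / 2 + D * (t - s) := by
  have h : ∀ x ∈ Set.uIcc s t, HasDerivAt
      (fun x : ℝ => A * x ^ 3 / 3 + B * x ^ 2 / 2 + D * x) (A * x ^ 2 + B * x + D) x := by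
    intro x _
    have h1 := (((hasDerivAt_pow 3 x).const_mul A).div_const 3).add
      (((hasDerivAt_pow 2 x).const_mul B).div_const 2)
    have h2 := h1.add ((hasDerivAt_id x).const_mul D)
    refine h2.congr_deriv ?_
    norm_num
    try ring
  rw [intervalIntegral.integral_eq_sub_of_hasDerivAt h
    (Continuous.intervalIntegrable (by fun_prop) _ _)]
  ring

/-- For the quadratic `f(x) = (C/2)x² + bx + c` on `[u, v]`, the minimum of `∫_u^v |f - ℓ|`
over all affine functions `ℓ` equals `|C| h³ / 32` where `h = v - u`. -/
theorem quadratic_best_L1_affine_error (C b c u v : ℝ) (huv : u < v) (f : ℝ → ℝ)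
    (hf : ∀ x, f x = C / 2 * x ^ 2 + b * x + c) :
    IsLeast {e : ℝ | ∃ α β : ℝ, e = ∫ x in u..v, |f x - (α * x + β)|}
      (|C| * (v - u) ^ 3 / 32) := by
  obtain ⟨p, hp⟩ : ∃ p, p = (3 * u + v) / 4 := ⟨_, rfl⟩
  obtain ⟨q, hq⟩ : ∃ q, q = (u + 3 * v) / 4 := ⟨_, rfl⟩
  have hup : u ≤ p := by linarith
  have hpq : p ≤ q := by linarith
  have hqv : q ≤ v := by linarith
  have hfc : Continuous f := by
    rw [show f = fun x => C / 2 * x ^ 2 + b * x + c from funext hf]; fun_prop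
  have split : ∀ α β : ℝ, ∫ x in u..v, |f x - (α * x + β)| =
      (∫ x in u..p, |f x - (α * x + β)|) + (∫ x in p..q, |f x - (α * x + β)|)
        + ∫ x in q..v, |f x - (α * x + β)| := by
    intro α β
    have hi : ∀ s t, IntervalIntegrable (fun x => |f x - (α * x + β)|)
        MeasureTheory.volume s t := fun s t =>
      Continuous.intervalIntegrable (by fun_prop) _ _
    rw [intervalIntegral.integral_add_adjacent_intervals (hi _ _) (hi _ _),
      intervalIntegral.integral_add_adjacent_intervals (hi _ _) (hi _ _)]
  have outer : ∀ x, 0 ≤ (x - p) * (x - q) →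
      |f x - ((b + C / 2 * (p + q)) * x + (c - C / 2 * (p * q)))| =
      |C| / 2 * x ^ 2 + (-(|C| / 2 * (p + q))) * x + |C| / 2 * (p * q) := by
    intro x hx
    rw [hf, show C / 2 * x ^ 2 + b * x + c - ((b + C / 2 * (p + q)) * x + (c - C / 2 * (p * q)))
      = C / 2 * ((x - p) * (x - q)) by ring, abs_mul, abs_of_nonneg hx, abs_div, abs_two]
    ring
  have inner : ∀ x, (x - p) * (x - q) ≤ 0 →
      |f x - ((b + C / 2 * (p + q)) * x + (c - C / 2 * (p * q)))| =
      (-(|C| / 2)) * x ^ 2 + (|C| / 2 * (p + q)) * x + (-(|C| / 2 * (p * q))) := by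
    intro x hx
    rw [hf, show C / 2 * x ^ 2 + b * x + c - ((b + C / 2 * (p + q)) * x + (c - C / 2 * (p * q)))
      = C / 2 * ((x - p) * (x - q)) by ring, abs_mul, abs_of_nonpos hx, abs_div, abs_two]
    ring
  constructor
  · refine ⟨b + C / 2 * (p + q), c - C / 2 * (p * q), ?_⟩
    rw [split]
    rw [intervalIntegral.integral_congr (a := u) (b := p) (fun x hx => outer x (by
      rw [Set.uIcc_of_le hup] at hx
      exact mul_nonneg_of_nonpos_of_nonpos (by linarith [hx.2]) (by linarith [hx.2])))]
    rw [intervalIntegral.integral_congr (a := p) (b := q) (fun x hx => inner x (by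
      rw [Set.uIcc_of_le hpq] at hx
      exact mul_nonpos_of_nonneg_of_nonpos (by linarith [hx.1]) (by linarith [hx.2])))]
    rw [intervalIntegral.integral_congr (a := q) (b := v) (fun x hx => outer x (by
      rw [Set.uIcc_of_le hqv] at hx
      exact mul_nonneg (by linarith [hx.1]) (by linarith [hx.1])))]
    rw [aux_quad_integral, aux_quad_integral, aux_quad_integral, hp, hq]
    ring
  · rintro e ⟨α, β, rfl⟩
    rw [split]
    have h1 := intervalIntegral.abs_integral_le_integral_abs
      (f := fun x => f x - (α * x + β)) (μ := MeasureTheory.volume) hup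
    have h2 := intervalIntegral.abs_integral_le_integral_abs
      (f := fun x => f x - (α * x + β)) (μ := MeasureTheory.volume) hpq
    have h3 := intervalIntegral.abs_integral_le_integral_abs
      (f := fun x => f x - (α * x + β)) (μ := MeasureTheory.volume) hqv
    have hI : ∀ s t, ∫ x in s..t, (f x - (α * x + β)) =
        C / 2 * (t ^ 3 - s ^ 3) / 3 + (b - α) * (t ^ 2 - s ^ 2) / 2 + (c - β) * (t - s) := by
      intro s t
      rw [← aux_quad_integral]
      congr 1
      funext x
      rw [hf]; ring
    have key : (∫ x in u..p, (f x - (α * x + β))) - (∫ x in p..q, (f x - (α * x + β)))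
        + (∫ x in q..v, (f x - (α * x + β))) = C * (v - u) ^ 3 / 32 := by
      rw [hI, hI, hI, hp, hq]; ring
    have hpos : 0 ≤ (v - u) ^ 3 := pow_nonneg (by linarith) 3
    have habs : |C| * (v - u) ^ 3 / 32 = |C * (v - u) ^ 3 / 32| := by
      rw [abs_div, abs_mul, abs_of_nonneg hpos]; norm_num
    rw [habs, ← key]
    refine (abs_add_le _ _).trans ?_
    have h4 := abs_sub (∫ x in u..p, (f x - (α * x + β))) (∫ x in p..q, (f x - (α * x + β)))
    linarith
end

section
/- Let C, b, c be real numbers, let f(x) = (C/2)x² + bx + c, let u < v, let p be the affine function with p(u) = f(u) and p(v) = f(v), and let m be the minimum of ∫_u^v |f(x) − ℓ(x)| dx over all affine functions ℓ. Then ∫_u^v |f(x) − p(x)| dx = (8/3) · m; that is, the L1 error of the endpoint interpolant exceeds the best L1 affine approximation error by exactly the factor 8/3. -/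
lemma integral_quad_aux (A B D s t : ℝ) :
    (∫ x in s..t, (A * x ^ 2 + B * x + D))
      = A * (t ^ 3 - s ^ 3) / 3 + B * (t ^ 2 - s ^ 2) / 2 + D * (t - s) := by
  have h : ∀ x ∈ Set.uIcc s t, HasDerivAt (fun x : ℝ => A * x ^ 3 / 3 + B * x ^ 2 / 2 + D * x)
      (A * x ^ 2 + B * x + D) x := by
    intro x _
    have h1 := (((hasDerivAt_pow 3 x).const_mul A).div_const 3).add
      (((hasDerivAt_pow 2 x).const_mul B).div_const 2)
    have h2 := h1.add ((hasDerivAt_id x).const_mul D)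
    refine h2.congr_deriv ?_
    norm_num
    ring
  rw [intervalIntegral.integral_eq_sub_of_hasDerivAt h
    (Continuous.intervalIntegrable (by fun_prop) _ _)]
  ring

lemma integral_abs_pos_aux (K y z s t : ℝ) (hst : s ≤ t)
    (h : ∀ x, s ≤ x → x ≤ t → 0 ≤ (x - y) * (x - z)) :
    (∫ x in s..t, |K * ((x - y) * (x - z))|)
      = |K| * ((t ^ 3 - s ^ 3) / 3 - (y + z) * (t ^ 2 - s ^ 2) / 2 + y * z * (t - s)) := by
  have e : (∫ x in s..t, |K * ((x - y) * (x - z))|)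
      = ∫ x in s..t, (|K| * x ^ 2 + (-(|K| * (y + z))) * x + |K| * (y * z)) := by
    apply intervalIntegral.integral_congr
    intro x hx
    rw [Set.uIcc_of_le hst] at hx
    simp only [abs_mul K, abs_of_nonneg (h x hx.1 hx.2)]
    ring
  rw [e, integral_quad_aux]
  ring

lemma integral_abs_neg_aux (K y z s t : ℝ) (hst : s ≤ t)
    (h : ∀ x, s ≤ x → x ≤ t → (x - y) * (x - z) ≤ 0) :
    (∫ x in s..t, |K * ((x - y) * (x - z))|)
      = -(|K| * ((t ^ 3 - s ^ 3) / 3 - (y + z) * (t ^ 2 - s ^ 2) / 2 + y * z * (t - s))) := by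
  have e : (∫ x in s..t, |K * ((x - y) * (x - z))|)
      = ∫ x in s..t, ((-|K|) * x ^ 2 + (|K| * (y + z)) * x + (-(|K| * (y * z)))) := by
    apply intervalIntegral.integral_congr
    intro x hx
    rw [Set.uIcc_of_le hst] at hx
    simp only [abs_mul K, abs_of_nonpos (h x hx.1 hx.2)]
    ring
  rw [e, integral_quad_aux]
  ring

lemma integral_split_aux (g : ℝ → ℝ) (hg : Continuous g) (s y z t : ℝ) :
    (∫ x in s..t, g x) = (∫ x in s..y, g x) + (∫ x in y..z, g x) + ∫ x in z..t, g x := by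
  rw [intervalIntegral.integral_add_adjacent_intervals,
    intervalIntegral.integral_add_adjacent_intervals] <;>
  exact hg.intervalIntegrable _ _

/-- For the quadratic `f(x) = (C/2)x² + bx + c` on `[u, v]`, the `L¹` error of the affine
interpolant `p` at the endpoints is exactly `8/3` times the best `L¹` affine approximation
error `m`. -/
theorem quadratic_interpolant_vs_best_L1 (C b c u v : ℝ) (huv : u < v) (f p : ℝ → ℝ)
    (hf : ∀ x, f x = C / 2 * x ^ 2 + b * x + c)
    (α β : ℝ) (hp : ∀ x, p x = α * x + β)
    (hpu : p u = f u) (hpv : p v = f v) (m : ℝ)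
    (hm : IsLeast {e : ℝ | ∃ γ δ : ℝ, e = ∫ x in u..v, |f x - (γ * x + δ)|} m) :
    (∫ x in u..v, |f x - p x|) = 8 / 3 * m := by
  obtain ⟨k, hk⟩ : ∃ k, k = (v - u) / 4 := ⟨_, rfl⟩
  obtain rfl : v = u + 4 * k := by rw [hk]; ring
  have hk0 : 0 < k := by linarith
  -- interpolation error
  have hI : (∫ x in u..(u + 4 * k), |f x - p x|) = 16 / 3 * |C| * k ^ 3 := by
    have hα : α = C / 2 * (2 * u + 4 * k) + b := by
      rw [hp, hf] at hpu hpv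
      have : (4 * k) * α = (4 * k) * (C / 2 * (2 * u + 4 * k) + b) := by linarith
      exact mul_left_cancel₀ (by positivity) this
    have hβ : β = C / 2 * u ^ 2 + b * u + c - α * u := by
      rw [hp, hf] at hpu; linarith
    have e : ∀ x, f x - p x = C / 2 * ((x - u) * (x - (u + 4 * k))) := by
      intro x; rw [hf, hp, hβ, hα]; ring
    simp only [e]
    rw [integral_abs_neg_aux _ _ _ _ _ huv.le
      (fun x h1 h2 => mul_nonpos_of_nonneg_of_nonpos (by linarith) (by linarith)),
      abs_div, abs_two]
    ring
  have hM : m = 2 * |C| * k ^ 3 := by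
    apply le_antisymm
    · refine hm.2 ⟨C / 2 * (2 * u + 4 * k) + b, c - C / 2 * ((u + k) * (u + 3 * k)), ?_⟩
      have e : ∀ x, f x - ((C / 2 * (2 * u + 4 * k) + b) * x
          + (c - C / 2 * ((u + k) * (u + 3 * k))))
          = C / 2 * ((x - (u + k)) * (x - (u + 3 * k))) := by
        intro x; rw [hf]; ring
      simp only [e]
      rw [integral_split_aux _ (by fun_prop) u (u + k) (u + 3 * k),
        integral_abs_pos_aux _ _ _ _ _ (by linarith)
          (fun x h1 h2 => mul_nonneg_of_nonpos_of_nonpos (by linarith) (by linarith)),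
        integral_abs_neg_aux _ _ _ _ _ (by linarith)
          (fun x h1 h2 => mul_nonpos_of_nonneg_of_nonpos (by linarith) (by linarith)),
        integral_abs_pos_aux _ _ _ _ _ (by linarith)
          (fun x h1 h2 => mul_nonneg (by linarith) (by linarith)),
        abs_div, abs_two]
      ring
    · obtain ⟨γ, δ, rfl⟩ := hm.1
      have e : ∀ x, f x - (γ * x + δ) = C / 2 * x ^ 2 + (b - γ) * x + (c - δ) := by
        intro x; rw [hf]; ring
      simp only [e]
      rw [integral_split_aux _ (by fun_prop) u (u + k) (u + 3 * k)]
      have key : ∀ s t, s ≤ t → |C / 2 * (t ^ 3 - s ^ 3) / 3 + (b - γ) * (t ^ 2 - s ^ 2) / 2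
          + (c - δ) * (t - s)| ≤ ∫ x in s..t, |C / 2 * x ^ 2 + (b - γ) * x + (c - δ)| := by
        intro s t hst
        rw [← integral_quad_aux]
        exact intervalIntegral.abs_integral_le_integral_abs hst
      have k1 := abs_le.1 (key u (u + k) (by linarith))
      have k2 := abs_le.1 (key (u + k) (u + 3 * k) (by linarith))
      have k3 := abs_le.1 (key (u + 3 * k) (u + 4 * k) (by linarith))
      rcases abs_cases C with ⟨h, _⟩ | ⟨h, _⟩ <;> rw [h] <;>
        linarith [k1.1, k1.2, k2.1, k2.2, k3.1, k3.2]
  rw [hI, hM]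
  ring
end

section
/- Let f be twice continuously differentiable on [u, v] with u < v, let h = v − u, and let ℓ be the affine function with ℓ(u + h/4) = f(u + h/4) and ℓ(u + 3h/4) = f(u + 3h/4). Then there exists η ∈ (u, v) such that (ℓ(u) − f(u)) + (ℓ(v) − f(v)) = −(3h²/16) · f''(η); that is, the sum of the endpoint displacements of the canonical-point interpolant has sign opposite to the local convexity/concavity of f. -/
/-- For `f` twice continuously differentiable on `[u, v]` (`h = v - u`) and `ℓ` the affine
interpolant of `f` at the canonical points `u + h/4` and `u + 3h/4`, there exists
`η ∈ (u, v)` with `(ℓ(u) - f(u)) + (ℓ(v) - f(v)) = -(3h²/16) f''(η)`; that is, the sum of the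
endpoint displacements has sign opposite to the local convexity/concavity of `f`. -/
theorem canonical_affine_displacement_sum (u v : ℝ) (huv : u < v) (f ℓ : ℝ → ℝ)
    (hf : ContDiffOn ℝ 2 f (Set.Icc u v))
    (α β : ℝ) (hℓ : ∀ x, ℓ x = α * x + β)
    (h1 : ℓ (u + (v - u) / 4) = f (u + (v - u) / 4))
    (h2 : ℓ (u + 3 * (v - u) / 4) = f (u + 3 * (v - u) / 4)) :
    ∃ η ∈ Set.Ioo u v,
      (ℓ u - f u) + (ℓ v - f v) =
        -(3 * (v - u) ^ 2 / 16) * iteratedDerivWithin 2 f (Set.Icc u v) η := by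
  have hs : UniqueDiffOn ℝ (Set.Icc u v) := uniqueDiffOn_Icc huv
  set d := iteratedDerivWithin 1 f (Set.Icc u v) with hd
  have hnhds : ∀ x ∈ Set.Ioo u v, Set.Icc u v ∈ nhds x := fun x hx => Icc_mem_nhds hx.1 hx.2
  have hfd : ∀ x ∈ Set.Ioo u v, HasDerivAt f (d x) x := by
    intro x hx
    have h := ((hf.differentiableOn (by norm_num)) x
      (Set.Ioo_subset_Icc_self hx)).hasDerivWithinAt.hasDerivAt (hnhds x hx)
    rw [hd, iteratedDerivWithin_one]
    exact h
  have hdd : ∀ x ∈ Set.Ioo u v,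
      HasDerivAt d (iteratedDerivWithin 2 f (Set.Icc u v) x) x := by
    intro x hx
    have h := ((hf.differentiableOn_iteratedDerivWithin (m := 1) (by norm_num) hs) x
      (Set.Ioo_subset_Icc_self hx)).hasDerivWithinAt.hasDerivAt (hnhds x hx)
    rw [iteratedDerivWithin_succ]
    exact h
  obtain ⟨m, hm⟩ : ∃ m, m = (u + v) / 2 := ⟨_, rfl⟩
  obtain ⟨c, hc, hceq⟩ := exists_ratio_hasDerivAt_eq_ratio_slope
    (fun t => f (m + t) + f (m - t)) (fun t => d (m + t) - d (m - t))
    (a := (v - u) / 4) (b := (v - u) / 2) (by linarith)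
    (by
      apply ContinuousOn.add
      · refine hf.continuousOn.comp (by fun_prop) ?_
        intro t ht
        constructor <;> linarith [ht.1, ht.2]
      · refine hf.continuousOn.comp (by fun_prop) ?_
        intro t ht
        constructor <;> linarith [ht.1, ht.2])
    (by
      intro t ht
      have e1 := (hfd (m + t) ⟨by linarith [ht.1, ht.2], by linarith [ht.1, ht.2]⟩).comp_const_add m t
      have e2 := (hfd (m - t) ⟨by linarith [ht.1, ht.2], by linarith [ht.1, ht.2]⟩).comp_const_sub m t
      exact (e1.add e2).congr_deriv (by ring))
    (fun t => t ^ 2) (fun t => 2 * t) (by fun_prop)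
    (by
      intro t ht
      simpa using hasDerivAt_pow 2 t)
  obtain ⟨hc1, hc2⟩ := hc
  have hsub : ∀ x ∈ Set.Icc (m - c) (m + c), x ∈ Set.Ioo u v := by
    intro x hx
    constructor <;> linarith [hx.1, hx.2]
  obtain ⟨η, hη, hηeq⟩ := exists_hasDerivAt_eq_slope d
    (iteratedDerivWithin 2 f (Set.Icc u v)) (a := m - c) (b := m + c) (by linarith)
    (fun x hx => (hdd x (hsub x hx)).continuousAt.continuousWithinAt)
    (fun x hx => hdd x (hsub x (Set.Ioo_subset_Icc_self hx)))
  refine ⟨η, hsub η (Set.Ioo_subset_Icc_self hη), ?_⟩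
  have hcpos : 0 < c := by linarith
  rw [eq_div_iff (by linarith)] at hηeq
  have a1 : m + (v - u) / 2 = v := by rw [hm]; ring
  have a2 : m - (v - u) / 2 = u := by rw [hm]; ring
  have a3 : m + (v - u) / 4 = u + 3 * (v - u) / 4 := by rw [hm]; ring
  have a4 : m - (v - u) / 4 = u + (v - u) / 4 := by rw [hm]; ring
  simp only [a1, a2, a3, a4] at hceq
  rw [← h1, ← h2, ← hηeq] at hceq
  simp only [hℓ] at hceq ⊢
  have h2c : (2 * c) ≠ 0 := by positivity
  apply mul_right_cancel₀ h2c
  linear_combination hceq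
end

section
/- Let f be twice continuously differentiable on [x_{i−1}, x_{i+1}] with x_{i−1} < x_i < x_{i+1}, let h_i = x_i − x_{i−1}, h_{i+1} = x_{i+1} − x_i, and let M = sup_{x ∈ [x_{i−1}, x_{i+1}]} |f''(x)|. Let ℓ_i be the affine function interpolating f at x_{i−1} + h_i/4 and x_{i−1} + 3h_i/4, and let ℓ_{i+1} be the affine function interpolating f at x_i + h_{i+1}/4 and x_i + 3h_{i+1}/4. Then the jump discontinuity at x_i between the two segments satisfies |ℓ_i(x_i) − ℓ_{i+1}(x_i)| ≤ (3M/16) · (h_i² + h_{i+1}²). -/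
/-- A `C²` function with `|f''| ≤ M` becomes convex after adding `M x² / 2`. -/
lemma convex_aux (a b M : ℝ) (hab : a < b) (f : ℝ → ℝ)
    (hf : ContDiffOn ℝ 2 f (Set.Icc a b))
    (hM : ∀ x ∈ Set.Icc a b, |iteratedDerivWithin 2 f (Set.Icc a b) x| ≤ M)
    (s : ℝ) (hs : |s| = 1) :
    ConvexOn ℝ (Set.Icc a b) (fun x => s * f x + M / 2 * x ^ 2) := by
  have hat : ∀ x ∈ Set.Ioo a b, ContDiffAt ℝ 2 f x := fun x hx =>
    hf.contDiffAt (Icc_mem_nhds hx.1 hx.2)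
  have hd1 : ∀ x ∈ Set.Ioo a b, HasDerivAt f (deriv f x) x := fun x hx =>
    ((hat x hx).differentiableAt (by norm_num)).hasDerivAt
  have hd2 : ∀ x ∈ Set.Ioo a b, HasDerivAt (deriv f) (deriv (deriv f) x) x := by
    intro x hx
    have h : ContDiffOn ℝ 2 f (Set.Ioo a b) := hf.mono Set.Ioo_subset_Icc_self
    have h2 : ContDiffOn ℝ 1 (deriv f) (Set.Ioo a b) :=
      h.deriv_of_isOpen isOpen_Ioo (by norm_num)
    exact ((h2.contDiffAt (isOpen_Ioo.mem_nhds hx)).differentiableAt (by norm_num)).hasDerivAt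
  have hb : ∀ x ∈ Set.Ioo a b, |deriv (deriv f) x| ≤ M := by
    intro x hx
    have h := hM x (Set.Ioo_subset_Icc_self hx)
    rw [iteratedDerivWithin_eq_iteratedDeriv (uniqueDiffOn_Icc hab) (hat x hx)
      (Set.Ioo_subset_Icc_self hx), iteratedDeriv_eq_iterate] at h
    exact h
  refine convexOn_of_hasDerivWithinAt2_nonneg (convex_Icc a b)
    (f' := fun x => s * deriv f x + M * x) (f'' := fun x => s * deriv (deriv f) x + M) ?_ ?_ ?_ ?_
  · have := hf.continuousOn
    fun_prop
  · intro x hx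
    rw [interior_Icc] at hx
    have h := ((hd1 x hx).const_mul s).add (((hasDerivAt_id x).pow 2).const_mul (M / 2))
    refine HasDerivAt.hasDerivWithinAt ?_
    convert h using 1
    · funext y
      simp
    · simp
      ring
  · intro x hx
    rw [interior_Icc] at hx
    have h := ((hd2 x hx).const_mul s).add ((hasDerivAt_id x).const_mul M)
    refine HasDerivAt.hasDerivWithinAt ?_
    convert h using 1
    · funext y
      simp
    · simp
  · intro x hx
    rw [interior_Icc] at hx
    have h := hb x hx
    have h2 : |s * deriv (deriv f) x| ≤ M := by rw [abs_mul, hs, one_mul]; exact h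
    linarith [(abs_le.mp h2).1]

/-- Bound on the jump discontinuity between adjacent independently optimized segments. Let `f`
be twice continuously differentiable on `[x₀, x₂]` with `x₀ < x₁ < x₂`,
`M = sup_{[x₀,x₂]} |f''|`, and let `ℓ₁`, `ℓ₂` be the affine functions interpolating `f` at the
canonical points of `[x₀, x₁]` and of `[x₁, x₂]` respectively. Then
`|ℓ₁(x₁) - ℓ₂(x₁)| ≤ (3M/16)(h₁² + h₂²)` where `h₁ = x₁ - x₀` and `h₂ = x₂ - x₁`. -/
theorem jump_discontinuity_bound (x₀ x₁ x₂ : ℝ) (h01 : x₀ < x₁) (h12 : x₁ < x₂)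
    (f ℓ₁ ℓ₂ : ℝ → ℝ)
    (hf : ContDiffOn ℝ 2 f (Set.Icc x₀ x₂)) (M : ℝ)
    (hM : IsLUB
      ((fun x => |iteratedDerivWithin 2 f (Set.Icc x₀ x₂) x|) '' Set.Icc x₀ x₂) M)
    (α₁ β₁ α₂ β₂ : ℝ) (hℓ₁ : ∀ x, ℓ₁ x = α₁ * x + β₁) (hℓ₂ : ∀ x, ℓ₂ x = α₂ * x + β₂)
    (h11 : ℓ₁ (x₀ + (x₁ - x₀) / 4) = f (x₀ + (x₁ - x₀) / 4))
    (h12' : ℓ₁ (x₀ + 3 * (x₁ - x₀) / 4) = f (x₀ + 3 * (x₁ - x₀) / 4))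
    (h21 : ℓ₂ (x₁ + (x₂ - x₁) / 4) = f (x₁ + (x₂ - x₁) / 4))
    (h22 : ℓ₂ (x₁ + 3 * (x₂ - x₁) / 4) = f (x₁ + 3 * (x₂ - x₁) / 4)) :
    |ℓ₁ x₁ - ℓ₂ x₁| ≤ 3 * M / 16 * ((x₁ - x₀) ^ 2 + (x₂ - x₁) ^ 2) := by
  have hM' : ∀ x ∈ Set.Icc x₀ x₂, |iteratedDerivWithin 2 f (Set.Icc x₀ x₂) x| ≤ M :=
    fun x hx => hM.1 ⟨x, hx, rfl⟩
  have h02 : x₀ < x₂ := h01.trans h12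
  have hMn : 0 ≤ M := (abs_nonneg _).trans (hM' x₀ ⟨le_rfl, h02.le⟩)
  have key : ∀ s : ℝ, |s| = 1 → ∀ p q : ℝ, p ∈ Set.Icc x₀ x₂ → q = 2 / 3 * x₁ + 1 / 3 * p →
      s * f q + M / 2 * q ^ 2 ≤
        2 / 3 * (s * f x₁ + M / 2 * x₁ ^ 2) + 1 / 3 * (s * f p + M / 2 * p ^ 2) := by
    intro s hs p q hp hq
    have h := (convex_aux x₀ x₂ M h02 f hf hM' s hs).2
      (show x₁ ∈ Set.Icc x₀ x₂ from ⟨h01.le, h12.le⟩) hp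
      (show (0 : ℝ) ≤ 2 / 3 by norm_num) (show (0 : ℝ) ≤ 1 / 3 by norm_num) (by norm_num)
    simp only [smul_eq_mul] at h
    rw [hq]
    exact h
  have hp1 : x₀ + (x₁ - x₀) / 4 ∈ Set.Icc x₀ x₂ := ⟨by linarith, by linarith⟩
  have hp2 : x₁ + 3 * (x₂ - x₁) / 4 ∈ Set.Icc x₀ x₂ := ⟨by linarith, by linarith⟩
  have a1 := key 1 (by simp) _ (x₀ + 3 * (x₁ - x₀) / 4) hp1 (by ring)
  have a2 := key (-1) (by simp) _ (x₀ + 3 * (x₁ - x₀) / 4) hp1 (by ring)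
  have b1 := key 1 (by simp) _ (x₁ + (x₂ - x₁) / 4) hp2 (by ring)
  have b2 := key (-1) (by simp) _ (x₁ + (x₂ - x₁) / 4) hp2 (by ring)
  rw [← h11, ← h12', hℓ₁, hℓ₁] at a1 a2
  rw [← h21, ← h22, hℓ₂, hℓ₂] at b1 b2
  have e1 : 0 ≤ M * (x₁ - x₀) ^ 2 := by positivity
  have e2 : 0 ≤ M * (x₂ - x₁) ^ 2 := by positivity
  rw [hℓ₁, hℓ₂, abs_le]
  constructor <;> nlinarith
end

section
/- Let f be twice continuously differentiable on [a, b], let a = x₀ < x₁ < … < x_N = b be a partition T with subintervals I_i = [x_{i−1}, x_i] of lengths h_i = x_i − x_{i−1}, and let π_T f be the polygonal interpolant of f on T. If the partition satisfies the error-equalization condition (sup_{x ∈ I_i} |f''(x)|) · h_i³ ≤ C for every i = 1, …, N and some constant C > 0, then ∫_a^b |f(x) − π_T f(x)| dx ≤ C · N / 12. -/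
/-- Pointwise bound for the error of linear interpolation. -/
lemma interp_pointwise (a b p q M : ℝ) (f : ℝ → ℝ) (hf : ContDiffOn ℝ 2 f (Set.Icc a b))
    (hap : a ≤ p) (hpq : p < q) (hqb : q ≤ b)
    (hM : ∀ t ∈ Set.Icc p q, |iteratedDerivWithin 2 f (Set.Icc a b) t| ≤ M)
    (t : ℝ) (ht : t ∈ Set.Icc p q) :
    |f t - (f p + (f q - f p) * (t - p) / (q - p))| ≤ M / 2 * ((t - p) * (q - t)) := by
  have hab : a < b := by linarith
  have hU := uniqueDiffOn_Icc hab
  have hsub : Set.Icc p q ⊆ Set.Icc a b := Set.Icc_subset_Icc hap hqb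
  have hd1 : ∀ s ∈ interior (Set.Icc p q),
      HasDerivWithinAt f (iteratedDerivWithin 1 f (Set.Icc a b) s) (interior (Set.Icc p q)) s := by
    intro s hs
    have hs' := hsub (interior_subset hs)
    rw [iteratedDerivWithin_one]
    exact ((hf.differentiableOn (by norm_num) s hs').hasDerivWithinAt).mono
      (interior_subset.trans hsub)
  have hd2 : ∀ s ∈ interior (Set.Icc p q),
      HasDerivWithinAt (iteratedDerivWithin 1 f (Set.Icc a b))
        (iteratedDerivWithin 2 f (Set.Icc a b) s) (interior (Set.Icc p q)) s := by
    intro s hs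
    have hs' := hsub (interior_subset hs)
    have h := hf.differentiableOn_iteratedDerivWithin (m := 1) (by norm_num) hU s hs'
    rw [show iteratedDerivWithin 2 f (Set.Icc a b) = _ from iteratedDerivWithin_succ (n := 1)]
    exact h.hasDerivWithinAt.mono (interior_subset.trans hsub)
  have hc : ContinuousOn f (Set.Icc p q) := hf.continuousOn.mono hsub
  have key : ∀ ε : ℝ, |ε| = 1 → 
      ε * (f t - (f p + (f q - f p) * (t - p) / (q - p))) ≤ M / 2 * ((t - p) * (q - t)) := by
    intro ε hε
    have hconv : ConvexOn ℝ (Set.Icc p q) (fun s => ε * f s + M / 2 * s ^ 2) := by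
      refine convexOn_of_hasDerivWithinAt2_nonneg (convex_Icc p q) (by fun_prop)
        (f' := fun s => ε * iteratedDerivWithin 1 f (Set.Icc a b) s + M * s)
        (f'' := fun s => ε * iteratedDerivWithin 2 f (Set.Icc a b) s + M) ?_ ?_ ?_
      · intro s hs
        have h2 : HasDerivWithinAt (fun s : ℝ => M / 2 * s ^ 2) (M * s)
            (interior (Set.Icc p q)) s := by
          have := ((hasDerivAt_pow 2 s).const_mul (M / 2)).hasDerivWithinAt
            (s := interior (Set.Icc p q))
          refine this.congr_deriv ?_
          norm_num; ring
        exact ((hd1 s hs).const_mul ε).add h2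
      · intro s hs
        have h2 : HasDerivWithinAt (fun s : ℝ => M * s) M
            (interior (Set.Icc p q)) s := by
          simpa using ((hasDerivAt_id s).const_mul M).hasDerivWithinAt
            (s := interior (Set.Icc p q))
        exact ((hd2 s hs).const_mul ε).add h2
      · intro s hs
        have h1 := hM s (interior_subset hs)
        have h3 : |ε * iteratedDerivWithin 2 f (Set.Icc a b) s| ≤ M := by
          rw [abs_mul, hε, one_mul]; exact h1
        have := (abs_le.1 h3).1
        show 0 ≤ ε * iteratedDerivWithin 2 f (Set.Icc a b) s + M
        linarith
    have hh : 0 < q - p := by linarith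
    have := hconv.2 (Set.left_mem_Icc.2 hpq.le) (Set.right_mem_Icc.2 hpq.le)
      (show 0 ≤ (q - t) / (q - p) from div_nonneg (by linarith [ht.2]) hh.le) (show 0 ≤ (t - p) / (q - p) from
        div_nonneg (by linarith [ht.1]) hh.le)
      (by field_simp; ring)
    simp only [smul_eq_mul] at this
    rw [show (q - t) / (q - p) * p + (t - p) / (q - p) * q = t by field_simp; ring] at this
    have e : (q - t) / (q - p) * (ε * f p + M / 2 * p ^ 2)
        + (t - p) / (q - p) * (ε * f q + M / 2 * q ^ 2)
        = ε * (f p + (f q - f p) * (t - p) / (q - p)) + M / 2 * ((t - p) * (q - t))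
          + M / 2 * t ^ 2 := by
      field_simp; ring
    rw [e] at this
    linarith
  rw [abs_le]
  have h1 := key 1 (by simp)
  have h2 := key (-1) (by simp)
  constructor <;> linarith

lemma interp_integral (p q M : ℝ) :
    ∫ t in p..q, M / 2 * ((t - p) * (q - t)) = M * (q - p) ^ 3 / 12 := by
  have hd : ∀ t ∈ Set.uIcc p q, HasDerivAt
      (fun t : ℝ => M / 2 * ((q - p) * (t - p) ^ 2 / 2 - (t - p) ^ 3 / 3))
      (M / 2 * ((t - p) * (q - t))) t := by
    intro t _
    have h1 := (hasDerivAt_id t).sub_const p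
    have h2 := ((((h1.pow 2).const_mul (q - p)).div_const 2).sub
      ((h1.pow 3).div_const 3)).const_mul (M / 2)
    refine h2.congr_deriv ?_
    simp only [id]; push_cast; ring
  rw [intervalIntegral.integral_eq_sub_of_hasDerivAt hd
    (Continuous.intervalIntegrable (by fun_prop) _ _)]
  ring

/-- **Error equalization bound.** Let `f` be twice continuously differentiable on `[a, b]`,
`T : a = x₀ < x₁ < … < x_N = b` a partition with polygonal interpolant `g = π_T f`. If the
partition satisfies the error-equalization condition `(sup_{Iᵢ} |f''|) hᵢ³ ≤ C` for every `i`
and some constant `C > 0`, then `∫_a^b |f - g| ≤ C N / 12`. -/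
theorem polygonal_interpolant_error_equalization (a b : ℝ) (N : ℕ) (hN : 0 < N)
    (f g : ℝ → ℝ)
    (hf : ContDiffOn ℝ 2 f (Set.Icc a b))
    (x : Fin (N + 1) → ℝ) (hmono : StrictMono x)
    (hx0 : x 0 = a) (hxN : x (Fin.last N) = b)
    (hg : ∀ i : Fin N, ∀ t ∈ Set.Icc (x i.castSucc) (x i.succ),
      g t = f (x i.castSucc) +
        (f (x i.succ) - f (x i.castSucc)) * (t - x i.castSucc) / (x i.succ - x i.castSucc))
    (C : ℝ) (hC : 0 < C)
    (heq : ∀ i : Fin N,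
      sSup ((fun t => |iteratedDerivWithin 2 f (Set.Icc a b) t|) ''
          Set.Icc (x i.castSucc) (x i.succ)) *
        (x i.succ - x i.castSucc) ^ 3 ≤ C) :
    (∫ t in a..b, |f t - g t|) ≤ C * N / 12 := by
  have hpiece : ∀ i : Fin N, IntervalIntegrable (fun t => |f t - g t|) MeasureTheory.volume
      (x i.castSucc) (x i.succ) ∧
      (∫ t in (x i.castSucc)..(x i.succ), |f t - g t|) ≤ C / 12 := by
    intro i
    have hpq : x i.castSucc < x i.succ := hmono Fin.castSucc_lt_succ
    have hap : a ≤ x i.castSucc := hx0 ▸ hmono.monotone (Fin.zero_le _)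
    have hqb : x i.succ ≤ b := hxN ▸ hmono.monotone (Fin.le_last _)
    have hsub : Set.Icc (x i.castSucc) (x i.succ) ⊆ Set.Icc a b := Set.Icc_subset_Icc hap hqb
    have hU := uniqueDiffOn_Icc (show a < b by linarith)
    have hcd : ContinuousOn (fun t => |iteratedDerivWithin 2 f (Set.Icc a b) t|)
        (Set.Icc (x i.castSucc) (x i.succ)) :=
      ((hf.continuousOn_iteratedDerivWithin (m := 2) (by norm_num) hU).mono hsub).abs
    have hbdd := (isCompact_Icc.image_of_continuousOn hcd).bddAbove
    have hi := heq i
    set M := sSup ((fun t => |iteratedDerivWithin 2 f (Set.Icc a b) t|) ''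
          Set.Icc (x i.castSucc) (x i.succ)) with hMdef
    have hM : ∀ t ∈ Set.Icc (x i.castSucc) (x i.succ),
        |iteratedDerivWithin 2 f (Set.Icc a b) t| ≤ M :=
      fun t ht => le_csSup hbdd ⟨t, ht, rfl⟩
    have hgc : ContinuousOn g (Set.Icc (x i.castSucc) (x i.succ)) := by
      refine ContinuousOn.congr (Continuous.continuousOn ?_) (hg i)
      fun_prop
    have hint : IntervalIntegrable (fun t => |f t - g t|) MeasureTheory.volume
      (x i.castSucc) (x i.succ) := by
      apply ContinuousOn.intervalIntegrable
      rw [Set.uIcc_of_le hpq.le]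
      exact ((hf.continuousOn.mono hsub).sub hgc).abs
    refine ⟨hint, ?_⟩
    have := intervalIntegral.integral_mono_on
      (g := fun t => M / 2 * ((t - x i.castSucc) * (x i.succ - t))) hpq.le hint
      (Continuous.intervalIntegrable (by fun_prop) _ _)
      (fun t ht => by
        rw [hg i t ht]
        exact interp_pointwise a b _ _ M f hf hap hpq hqb hM t ht)
    rw [interp_integral] at this
    linarith
  let y : ℕ → ℝ := fun k => if h : k < N + 1 then x ⟨k, h⟩ else b
  have hy1 : ∀ k (hk : k < N), y k = x (Fin.castSucc ⟨k, hk⟩) := by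
    intro k hk
    simp only [y, dif_pos (show k < N + 1 by omega)]
    rfl
  have hy2 : ∀ k (hk : k < N), y (k + 1) = x (Fin.succ ⟨k, hk⟩) := by
    intro k hk
    simp only [y, dif_pos (show k + 1 < N + 1 by omega)]
    rfl
  have hy0 : y 0 = a := by rw [hy1 0 hN, ← hx0]; rfl
  have hyN : y N = b := by
    simp only [y, dif_pos (show N < N + 1 by omega), ← hxN]
    rfl
  have hsum := intervalIntegral.sum_integral_adjacent_intervals (a := y) (n := N)
    (f := fun t => |f t - g t|) (μ := MeasureTheory.volume) (fun k hk => by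
      rw [hy1 k hk, hy2 k hk]; exact (hpiece ⟨k, hk⟩).1)
  rw [hy0, hyN] at hsum
  rw [← hsum]
  calc _ ≤ ∑ k ∈ Finset.range N, C / 12 := by
        refine Finset.sum_le_sum fun k hk => ?_
        have hk' := Finset.mem_range.1 hk
        rw [hy1 k hk', hy2 k hk']; exact (hpiece ⟨k, hk'⟩).2
    _ = C * N / 12 := by simp; ring
end

section
/- Let f be continuous and strictly convex on [u, v] with u < v, and let h = v − u. Then the affine function ℓ* determined by ℓ*(u + h/4) = f(u + h/4) and ℓ*(u + 3h/4) = f(u + 3h/4) is the unique minimizer of ∫_u^v |f(x) − ℓ(x)| dx over all affine functions ℓ. -/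
theorem aux_abs (p q : ℝ) (hpq : p < q) (g : ℝ → ℝ) (hg : ContinuousOn g (Set.Icc p q)) :
    (∫ x in p..q, g x) ≤ (∫ x in p..q, |g x|) ∧
    ((∫ x in p..q, |g x|) ≤ (∫ x in p..q, g x) → ∀ x ∈ Set.Icc p q, 0 ≤ g x) := by
  constructor
  · apply intervalIntegral.integral_mono_on hpq.le
    · exact hg.intervalIntegrable_of_Icc hpq.le
    · exact hg.abs.intervalIntegrable_of_Icc hpq.le
    · intro x _
      exact le_abs_self _
  · intro h x hx
    by_contra hneg
    push Not at hneg
    have := intervalIntegral.integral_lt_integral_of_continuousOn_of_le_of_exists_lt hpq hg hg.abs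
      (fun y _ => le_abs_self _) ⟨x, hx, by
        have := abs_nonneg (g x)
        linarith⟩
    linarith

theorem aux_affine (p q : ℝ) (hpq : p < q) (f : ℝ → ℝ) (hf : ContinuousOn f (Set.Icc p q))
    (γ δ : ℝ) : (∫ x in p..q, (f x - (γ * x + δ))) =
      (∫ x in p..q, f x) - (γ * ((q ^ 2 - p ^ 2) / 2) + δ * (q - p)) := by
  have h1 : IntervalIntegrable (fun x : ℝ => γ * x) MeasureTheory.volume p q :=
    (by fun_prop : Continuous (fun x : ℝ => γ * x)).intervalIntegrable _ _
  have h2 : IntervalIntegrable (fun x : ℝ => γ * x + δ) MeasureTheory.volume p q :=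
    (by fun_prop : Continuous (fun x : ℝ => γ * x + δ)).intervalIntegrable _ _
  rw [intervalIntegral.integral_sub (hf.intervalIntegrable_of_Icc hpq.le) h2,
    intervalIntegral.integral_add h1 (by simp), intervalIntegral.integral_const_mul, integral_id]
  simp
  ring

/-- For `f` continuous and strictly convex on `[u, v]` (`h = v - u`), the affine function
interpolating `f` at the canonical points `u + h/4` and `u + 3h/4` is the unique minimizer of
`∫_u^v |f - ℓ|` over all affine functions `ℓ`. -/
theorem strict_convex_best_L1_affine_unique (u v : ℝ) (huv : u < v) (f ℓstar : ℝ → ℝ)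
    (hf : ContinuousOn f (Set.Icc u v))
    (hconv : StrictConvexOn ℝ (Set.Icc u v) f)
    (α β : ℝ) (hℓ : ∀ x, ℓstar x = α * x + β)
    (h1 : ℓstar (u + (v - u) / 4) = f (u + (v - u) / 4))
    (h2 : ℓstar (u + 3 * (v - u) / 4) = f (u + 3 * (v - u) / 4)) :
    (∀ γ δ : ℝ, (∫ x in u..v, |f x - ℓstar x|) ≤ ∫ x in u..v, |f x - (γ * x + δ)|) ∧
      (∀ γ δ : ℝ,
        (∫ x in u..v, |f x - (γ * x + δ)|) = (∫ x in u..v, |f x - ℓstar x|) →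
        ∀ x, γ * x + δ = ℓstar x) := by
  obtain ⟨a, ha⟩ : ∃ a, a = u + (v - u) / 4 := ⟨_, rfl⟩
  obtain ⟨b, hb⟩ : ∃ b, b = u + 3 * (v - u) / 4 := ⟨_, rfl⟩
  rw [← ha] at h1
  rw [← hb] at h2
  have hua : u < a := by linarith
  have hab : a < b := by linarith
  have hbv : b < v := by linarith
  have hf1 : ContinuousOn f (Set.Icc u a) := hf.mono (Set.Icc_subset_Icc le_rfl (by linarith))
  have hf2 : ContinuousOn f (Set.Icc a b) := hf.mono (Set.Icc_subset_Icc hua.le hbv.le)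
  have hf3 : ContinuousOn f (Set.Icc b v) := hf.mono (Set.Icc_subset_Icc (by linarith) le_rfl)
  have hc : ∀ (γ δ : ℝ) (s : Set ℝ), ContinuousOn f s →
      ContinuousOn (fun x => f x - (γ * x + δ)) s := by
    intro γ δ s hs
    exact hs.sub (by fun_prop)
  have split : ∀ γ δ : ℝ, (∫ x in u..v, |f x - (γ * x + δ)|) =
      (∫ x in u..a, |f x - (γ * x + δ)|) + (∫ x in a..b, |f x - (γ * x + δ)|)
        + (∫ x in b..v, |f x - (γ * x + δ)|) := by
    intro γ δ
    have i1 := (hc γ δ _ hf1).abs.intervalIntegrable_of_Icc (μ := MeasureTheory.volume) hua.le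
    have i2 := (hc γ δ _ hf2).abs.intervalIntegrable_of_Icc (μ := MeasureTheory.volume) hab.le
    have i3 := (hc γ δ _ hf3).abs.intervalIntegrable_of_Icc (μ := MeasureTheory.volume) hbv.le
    rw [intervalIntegral.integral_add_adjacent_intervals i1 i2,
      intervalIntegral.integral_add_adjacent_intervals (i1.trans i2) i3]
  have canon : ∀ γ δ : ℝ, (∫ x in u..a, (f x - (γ * x + δ))) - (∫ x in a..b, (f x - (γ * x + δ)))
      + (∫ x in b..v, (f x - (γ * x + δ))) =
      (∫ x in u..a, f x) - (∫ x in a..b, f x) + (∫ x in b..v, f x) := by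
    intro γ δ
    rw [aux_affine _ _ hua f hf1, aux_affine _ _ hab f hf2, aux_affine _ _ hbv f hf3, ha, hb]
    ring
  have low : ∀ γ δ : ℝ,
      (∫ x in u..a, (f x - (γ * x + δ))) ≤ (∫ x in u..a, |f x - (γ * x + δ)|) ∧
      -(∫ x in a..b, (f x - (γ * x + δ))) ≤ (∫ x in a..b, |f x - (γ * x + δ)|) ∧
      (∫ x in b..v, (f x - (γ * x + δ))) ≤ (∫ x in b..v, |f x - (γ * x + δ)|) := by
    intro γ δ
    refine ⟨(aux_abs _ _ hua _ (hc γ δ _ hf1)).1, ?_, (aux_abs _ _ hbv _ (hc γ δ _ hf3)).1⟩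
    have := (aux_abs _ _ hab _ (hc γ δ _ hf2).neg).1
    simpa only [Pi.neg_apply, abs_neg, intervalIntegral.integral_neg] using this
  have hcv := hconv.convexOn
  rw [hℓ] at h1 h2
  have s1 : ∀ x ∈ Set.Icc u a, 0 ≤ f x - (α * x + β) := by
    intro x hx
    rcases hx.2.eq_or_lt with h | h
    · subst h
      linarith
    · have := hcv.slope_mono_adjacent (x := x) (y := a) (z := b) ⟨hx.1, by linarith⟩
        ⟨by linarith, hbv.le⟩ h hab
      rw [← h1, ← h2, show (α * b + β - (α * a + β)) = α * (b - a) by ring,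
        mul_div_cancel_right₀ _ (by linarith), div_le_iff₀ (by linarith)] at this
      linarith
  have s3 : ∀ x ∈ Set.Icc b v, 0 ≤ f x - (α * x + β) := by
    intro x hx
    rcases hx.1.eq_or_lt with h | h
    · subst h
      linarith
    · have := hcv.slope_mono_adjacent (x := a) (y := b) (z := x) ⟨hua.le, by linarith⟩
        ⟨by linarith, hx.2⟩ hab h
      rw [← h1, ← h2, show (α * b + β - (α * a + β)) = α * (b - a) by ring,
        mul_div_cancel_right₀ _ (by linarith), le_div_iff₀ (by linarith)] at this
      linarith
  have s2 : ∀ x ∈ Set.Icc a b, f x - (α * x + β) ≤ 0 := by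
    intro x hx
    rcases hx.1.eq_or_lt with h | h
    · subst h
      linarith
    rcases hx.2.eq_or_lt with h' | h'
    · subst h'
      linarith
    have := hcv.slope_mono_adjacent (x := a) (y := x) (z := b) ⟨hua.le, by linarith⟩
        ⟨by linarith, hbv.le⟩ h h'
    rw [← h1, ← h2, div_le_div_iff₀ (by linarith) (by linarith)] at this
    have h3 : (f x - (α * x + β)) * (b - a) ≤ 0 := by nlinarith
    by_contra hn
    push Not at hn
    have := mul_pos hn (sub_pos.2 hab)
    linarith
  have opt : (∫ x in u..v, |f x - ℓstar x|) =
      (∫ x in u..a, f x) - (∫ x in a..b, f x) + (∫ x in b..v, f x) := by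
    simp only [hℓ]
    rw [split, ← canon α β]
    have e1 : (∫ x in u..a, |f x - (α * x + β)|) = ∫ x in u..a, (f x - (α * x + β)) := by
      apply intervalIntegral.integral_congr
      intro x hx
      rw [Set.uIcc_of_le hua.le] at hx
      exact abs_of_nonneg (s1 x hx)
    have e3 : (∫ x in b..v, |f x - (α * x + β)|) = ∫ x in b..v, (f x - (α * x + β)) := by
      apply intervalIntegral.integral_congr
      intro x hx
      rw [Set.uIcc_of_le hbv.le] at hx
      exact abs_of_nonneg (s3 x hx)
    have e2 : (∫ x in a..b, |f x - (α * x + β)|) = -∫ x in a..b, (f x - (α * x + β)) := by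
      rw [← intervalIntegral.integral_neg]
      apply intervalIntegral.integral_congr
      intro x hx
      rw [Set.uIcc_of_le hab.le] at hx
      exact abs_of_nonpos (s2 x hx)
    rw [e1, e2, e3]
    ring
  refine ⟨?_, ?_⟩
  · intro γ δ
    rw [opt, split, ← canon γ δ]
    obtain ⟨l1, l2, l3⟩ := low γ δ
    linarith
  · intro γ δ heq
    rw [opt, split, ← canon γ δ] at heq
    obtain ⟨l1, l2, l3⟩ := low γ δ
    have g1 := (aux_abs _ _ hua _ (hc γ δ _ hf1)).2 (by linarith) a ⟨hua.le, le_rfl⟩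
    have g3 := (aux_abs _ _ hbv _ (hc γ δ _ hf3)).2 (by linarith) b ⟨le_rfl, hbv.le⟩
    have g2 := (aux_abs _ _ hab _ (hc γ δ _ hf2).neg).2 (by
      simp only [Pi.neg_apply, abs_neg, intervalIntegral.integral_neg]
      linarith)
    have g2a := g2 a ⟨le_rfl, hab.le⟩
    have g2b := g2 b ⟨hab.le, le_rfl⟩
    simp only [Pi.neg_apply] at g1 g3 g2a g2b
    have ea : γ * a + δ = α * a + β := by linarith
    have eb : γ * b + δ = α * b + β := by linarith
    have hγ : γ = α := by
      have : (γ - α) * (b - a) = 0 := by linarith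
      rcases mul_eq_zero.1 this with h | h <;> linarith
    subst hγ
    intro x
    rw [hℓ]
    linarith
end

section
/- (Jackson's uniqueness theorem for L1 approximation.) Let f be continuous on [a, b] with a < b, and let n ≥ 0. Then there is exactly one polynomial p* of degree at most n minimizing ∫_a^b |f(x) − p(x)| dx over all polynomials p of degree at most n; that is, the best L1 approximation to a continuous function out of the polynomials of degree ≤ n exists and is unique. -/
open Polynomial MeasureTheory Filter Topology

/-- A polynomial matching a prescribed sign pattern with breakpoints in `Z`. -/
lemma exists_sign_poly (S : Set ℝ) (Z : Finset ℝ) : ∀ g : ℝ → ℝ,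
    (∀ x ∈ S, ∀ y ∈ S, x ≤ y → (∀ z ∈ Z, x < z → ¬ z < y) → 0 < g x * g y) →
    ∃ q : Polynomial ℝ, q ≠ 0 ∧ q.natDegree ≤ Z.card ∧ ∀ x ∈ S, 0 ≤ q.eval x * g x := by
  induction Z using Finset.induction_on_max with
  | empty =>
    intro g H
    have H' : ∀ x ∈ S, ∀ y ∈ S, 0 < g x * g y := by
      intro x hx y hy
      rcases le_total x y with h | h
      · exact H x hx y hy h (by simp)
      · rw [mul_comm]; exact H y hy x hx h (by simp)
    by_cases hneg : ∃ x ∈ S, g x < 0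
    · obtain ⟨x0, hx0, h0⟩ := hneg
      refine ⟨-1, by simp, by simp, fun x hx => ?_⟩
      have := H' x hx x0 hx0
      simp only [eval_neg, eval_one]
      nlinarith
    · push Not at hneg
      exact ⟨1, by simp, by simp, fun x hx => by simpa using hneg x hx⟩
  | insert z Z' hz ih =>
    intro g H
    have hzn : z ∉ Z' := fun h => lt_irrefl _ (hz z h)
    rw [Finset.card_insert_of_notMem hzn]
    have Hle : ∀ x ∈ S, ∀ y ∈ S, x ≤ y → y ≤ z → (∀ w ∈ Z', x < w → ¬ w < y) →
        0 < g x * g y := by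
      intro x hx y hy hxy hyz h
      refine H x hx y hy hxy fun w hw => ?_
      rcases Finset.mem_insert.1 hw with rfl | hw
      · intro _; exact not_lt.2 hyz
      · exact h w hw
    have Hgt : ∀ x ∈ S, ∀ y ∈ S, z < x → z < y → 0 < g x * g y := by
      have : ∀ x ∈ S, ∀ y ∈ S, x ≤ y → z < x → 0 < g x * g y := by
        intro x hx y hy hxy hzx
        refine H x hx y hy hxy fun w hw hxw => ?_
        rcases Finset.mem_insert.1 hw with rfl | hw
        · linarith
        · linarith [hz w hw]
      intro x hx y hy h1 h2
      rcases le_total x y with h | h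
      · exact this x hx y hy h h1
      · rw [mul_comm]; exact this y hy x hx h h2
    by_cases hH : ∀ x ∈ S, ∀ y ∈ S, x ≤ y → (∀ w ∈ Z', x < w → ¬ w < y) → 0 < g x * g y
    · obtain ⟨q, h1, h2, h3⟩ := ih g hH
      exact ⟨q, h1, by omega, h3⟩
    · push Not at hH
      obtain ⟨x0, hx0, y0, hy0, hxy0, hw0, hs0⟩ := hH
      have hzy0 : z < y0 := by
        by_contra h
        have := Hle x0 hx0 y0 hy0 hxy0 (not_lt.1 h) (fun w hw h => not_lt.2 (hw0 w hw h))
        linarith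
      have hxz0 : x0 ≤ z := by
        by_contra h
        have := Hgt x0 hx0 y0 hy0 (not_le.1 h) hzy0
        linarith
      obtain ⟨q, h1, h2, h3⟩ := ih (fun x => if x ≤ z then g x else - g x) (by
        intro x hx y hy hxy h
        by_cases hyz : y ≤ z
        · have hxz : x ≤ z := hxy.trans hyz
          simp only [hyz, hxz, if_true]
          exact Hle x hx y hy hxy hyz h
        · by_cases hxz : x ≤ z
          · simp only [hyz, hxz, if_true, if_false]
            have e1 : 0 < g x * g x0 := by
              rcases le_total x x0 with h' | h'
              · refine Hle x hx x0 hx0 h' hxz0 fun w hw hxw hwx => h w hw hxw ?_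
                linarith [hz w hw]
              · rw [mul_comm]
                refine Hle x0 hx0 x hx h' hxz fun w hw hxw hwx => ?_
                linarith [hw0 w hw hxw, hz w hw]
            have e2 := Hgt y hy y0 hy0 (not_le.1 hyz) hzy0
            by_contra hc
            have e3 : 0 ≤ g x * g y := by linarith
            have e4 := mul_pos e1 e2
            have e5 : g x * g y * (g x0 * g y0) ≤ 0 := mul_nonpos_of_nonneg_of_nonpos e3 hs0
            nlinarith
          · simp only [hyz, hxz, if_false]
            have := Hgt x hx y hy (not_le.1 hxz) (not_le.1 hyz)
            linarith)
      refine ⟨q * (-(X - C z)), mul_ne_zero h1 (neg_ne_zero.2 (X_sub_C_ne_zero z)), ?_, ?_⟩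
      · refine natDegree_mul_le.trans ?_
        rw [natDegree_neg, natDegree_X_sub_C]
        omega
      · intro x hx
        have := h3 x hx
        simp only [eval_mul, eval_neg, eval_sub, eval_X, eval_C]
        by_cases hxz : x ≤ z
        · simp only [hxz, if_true] at this
          have := mul_nonneg this (sub_nonneg.2 hxz)
          linarith
        · simp only [hxz, if_false] at this
          have := mul_nonneg this (sub_nonneg.2 (not_le.1 hxz).le)
          linarith

lemma exists_nearest {E : Type*} [NormedAddCommGroup E] [NormedSpace ℝ E]
    (W : Submodule ℝ E) [FiniteDimensional ℝ W] (x : E) :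
    ∃ w : W, ∀ v : W, ‖x - w‖ ≤ ‖x - v‖ := by
  have : ProperSpace W := FiniteDimensional.proper ℝ W
  refine Continuous.exists_forall_le (f := fun w : W => ‖x - w‖) (by fun_prop) ?_
  have h1 : Tendsto (fun w : W => ‖w‖ - ‖x‖) (cocompact W) atTop :=
    tendsto_atTop_add_const_right _ _ (tendsto_norm_cocompact_atTop (E := W))
  refine tendsto_atTop_mono (fun w => ?_) h1
  have := norm_sub_norm_le (w : E) x
  rw [norm_sub_rev] at this
  simpa using this

lemma exists_best (a b : ℝ) (hab : a < b) (n : ℕ) (f : ℝ → ℝ)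
    (hf : ContinuousOn f (Set.Icc a b)) :
    ∃ p : Polynomial ℝ, p.degree ≤ (n : ℕ) ∧
      ∀ q : Polynomial ℝ, q.degree ≤ (n : ℕ) →
        (∫ x in a..b, |f x - p.eval x|) ≤ ∫ x in a..b, |f x - q.eval x| := by
  have hfi : Integrable f (volume.restrict (Set.Ioc a b)) :=
    (hf.integrableOn_Icc).mono_set Set.Ioc_subset_Icc_self
  have hpi : ∀ p : Polynomial ℝ, Integrable (fun x => p.eval x) (volume.restrict (Set.Ioc a b)) :=
    fun p => (p.continuous.continuousOn.integrableOn_Icc).mono_set Set.Ioc_subset_Icc_self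
  let T : Polynomial.degreeLE ℝ (n : ℕ) →ₗ[ℝ] Lp ℝ 1 (volume.restrict (Set.Ioc a b)) :=
    { toFun := fun p => (hpi p).toL1 _
      map_add' := by
        intro p q
        rw [← Integrable.toL1_add, Integrable.toL1_eq_toL1_iff]
        exact Eventually.of_forall fun x => by simp
      map_smul' := by
        intro c p
        rw [RingHom.id_apply, ← Integrable.toL1_smul, Integrable.toL1_eq_toL1_iff]
        exact Eventually.of_forall fun x => by simp }
  have : FiniteDimensional ℝ (Polynomial.degreeLE ℝ (n : ℕ)) := by
    rw [← Polynomial.degreeLT_succ_eq_degreeLE]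
    exact Module.Finite.equiv (Polynomial.degreeLTEquiv ℝ (n+1)).symm
  have key : ∀ p : Polynomial.degreeLE ℝ (n : ℕ),
      ‖hfi.toL1 f - T p‖ = ∫ x in a..b, |f x - (p : Polynomial ℝ).eval x| := by
    intro p
    have : hfi.toL1 f - T p = (hfi.sub (hpi p)).toL1 _ := (Integrable.toL1_sub _ _ hfi (hpi p)).symm
    rw [this, L1.norm_of_fun_eq_integral_norm, intervalIntegral.integral_of_le hab.le]
    rfl
  obtain ⟨⟨_, p, rfl⟩, hw⟩ := exists_nearest (LinearMap.range T) (hfi.toL1 f)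
  refine ⟨p, Polynomial.mem_degreeLE.1 p.2, fun q hq => ?_⟩
  have := hw ⟨T ⟨q, Polynomial.mem_degreeLE.2 hq⟩, ⟨_, rfl⟩⟩
  simp only [key] at this
  exact this

/-- If `e` has finitely many zeros and `q` has matching sign, moving along `q` improves. -/
lemma exists_improve (a b : ℝ) (hab : a < b) (e : ℝ → ℝ) (he : ContinuousOn e (Set.Icc a b))
    (Z : Finset ℝ) (hZ : ∀ x ∈ Set.Icc a b, e x = 0 → x ∈ Z) (q : Polynomial ℝ) (hq : q ≠ 0)
    (hs : ∀ x ∈ Set.Icc a b, 0 ≤ q.eval x * e x)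
    (hmin : ∀ t : ℝ, (∫ x in a..b, |e x|) ≤ ∫ x in a..b, |e x - t * q.eval x|) : False := by
  have hI : Set.uIcc a b = Set.Icc a b := Set.uIcc_of_le hab.le
  have hci : ∀ g : ℝ → ℝ, ContinuousOn g (Set.Icc a b) → IntervalIntegrable g volume a b :=
    fun g hg => ContinuousOn.intervalIntegrable (by rwa [hI])
  have hqc : ContinuousOn (fun x => q.eval x) (Set.Icc a b) := q.continuous.continuousOn
  have hFc : ∀ t : ℝ, ContinuousOn (fun x => t⁻¹ * (|e x - t * q.eval x| - |e x|))
      (Set.Icc a b) := fun t =>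
    continuousOn_const.mul (((he.sub (continuousOn_const.mul hqc)).abs).sub he.abs)
  have hlim : Tendsto (fun t : ℝ => ∫ x in a..b, t⁻¹ * (|e x - t * q.eval x| - |e x|))
      (𝓝[>] 0) (𝓝 (∫ x in a..b, - |q.eval x|)) := by
    refine intervalIntegral.tendsto_integral_filter_of_dominated_convergence
      (fun x => |q.eval x|) ?_ ?_ (hci _ hqc.abs) ?_
    · exact Eventually.of_forall fun t => by
        rw [Set.uIoc_of_le hab.le]
        exact (hci _ (hFc t)).1.aestronglyMeasurable
    · filter_upwards [self_mem_nhdsWithin] with t ht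
      refine Eventually.of_forall fun x _ => ?_
      have ht : 0 < t := ht
      rw [Real.norm_eq_abs, abs_mul, abs_of_pos (inv_pos.2 ht), inv_mul_le_iff₀ ht]
      refine (abs_abs_sub_abs_le _ _).trans ?_
      rw [show e x - t * q.eval x - e x = -(t * q.eval x) by ring, abs_neg, abs_mul,
        abs_of_pos ht]
    · have hae : ∀ᵐ x : ℝ, x ∉ (Z : Set ℝ) :=
        (Z.countable_toSet.measure_zero volume : volume (Z : Set ℝ) = 0) |> measure_eq_zero_iff_ae_notMem.1
      filter_upwards [hae] with x hx hxI
      rw [Set.uIoc_of_le hab.le] at hxI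
      have hxI : x ∈ Set.Icc a b := Set.Ioc_subset_Icc_self hxI
      have hne : e x ≠ 0 := fun h => hx (hZ x hxI h)
      have hsx := hs x hxI
      refine tendsto_const_nhds.congr' ?_
      have h0 : Tendsto (fun t : ℝ => t * |q.eval x|) (𝓝[>] 0) (𝓝 0) := by
        have : Tendsto (fun t : ℝ => t * |q.eval x|) (𝓝 0) (𝓝 (0 * |q.eval x|)) :=
          (continuous_id.mul continuous_const).tendsto 0
        rw [zero_mul] at this
        exact this.mono_left nhdsWithin_le_nhds
      filter_upwards [self_mem_nhdsWithin, h0.eventually_lt_const (abs_pos.2 hne)] with t ht hlt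
      have ht : 0 < t := ht
      rw [eq_inv_mul_iff_mul_eq₀ ht.ne']
      rcases lt_or_gt_of_ne hne with hn | hp
      · have hq0 : q.eval x ≤ 0 := by
          by_contra h
          nlinarith
        rw [abs_of_neg hn, abs_of_nonpos hq0] at *
        rw [abs_of_nonpos (by linarith)]
        ring
      · have hq0 : 0 ≤ q.eval x := by
          by_contra h
          nlinarith
        rw [abs_of_pos hp, abs_of_nonneg hq0] at *
        rw [abs_of_nonneg (by linarith)]
        ring
  have hge : 0 ≤ ∫ x in a..b, - |q.eval x| := by
    refine ge_of_tendsto hlim ?_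
    filter_upwards [self_mem_nhdsWithin] with t ht
    have ht : 0 < t := ht
    rw [intervalIntegral.integral_const_mul, intervalIntegral.integral_sub
      (hci (fun x => |e x - t * q.eval x|) (he.sub (continuousOn_const.mul hqc)).abs)
      (hci _ he.abs)]
    exact mul_nonneg (inv_pos.2 ht).le (sub_nonneg.2 (hmin t))
  have hpos : 0 < ∫ x in a..b, |q.eval x| := by
    refine intervalIntegral.integral_pos hab hqc.abs (fun _ _ => abs_nonneg _) ?_
    by_contra hc
    push Not at hc
    apply hq
    refine Polynomial.eq_zero_of_infinite_isRoot q ((Set.Icc_infinite hab).mono fun x hx => ?_)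
    exact abs_nonpos_iff.1 (hc x hx)
  rw [intervalIntegral.integral_neg] at hge
  linarith

/-- **Jackson's uniqueness theorem for `L¹` approximation.** For `f` continuous on `[a, b]`
and `n ≥ 0`, there is exactly one polynomial of degree at most `n` minimizing
`∫_a^b |f - p|` over all polynomials `p` of degree at most `n`. -/
theorem jackson_L1_best_approximation_unique (a b : ℝ) (hab : a < b) (n : ℕ) (f : ℝ → ℝ)
    (hf : ContinuousOn f (Set.Icc a b)) :
    ∃! p : Polynomial ℝ, p.degree ≤ (n : ℕ) ∧
      ∀ q : Polynomial ℝ, q.degree ≤ (n : ℕ) →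
        (∫ x in a..b, |f x - p.eval x|) ≤ ∫ x in a..b, |f x - q.eval x| := by
  obtain ⟨p1, hd1, hm1⟩ := exists_best a b hab n f hf
  refine ⟨p1, ⟨hd1, hm1⟩, ?_⟩
  rintro p2 ⟨hd2, hm2⟩
  by_contra hne
  have hI : Set.uIcc a b = Set.Icc a b := Set.uIcc_of_le hab.le
  have hc : ∀ p : Polynomial ℝ, ContinuousOn (fun x => f x - p.eval x) (Set.Icc a b) :=
    fun p => hf.sub p.continuous.continuousOn
  have hi : ∀ p : Polynomial ℝ, IntervalIntegrable (fun x => |f x - p.eval x|) volume a b :=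
    fun p => ContinuousOn.intervalIntegrable (by rw [hI]; exact (hc p).abs)
  have hsm : ∀ (c : ℝ) (p : Polynomial ℝ), p.degree ≤ (n : ℕ) → (C c * p).degree ≤ (n : ℕ) := by
    intro c p hp
    rw [← smul_eq_C_mul]
    exact (degree_smul_le c p).trans hp
  set p : Polynomial ℝ := C (1/2) * (p1 + p2) with hp
  have hpd : p.degree ≤ (n : ℕ) := hsm _ _ ((degree_add_le _ _).trans (max_le hd1 hd2))
  have hpe : ∀ x, p.eval x = (p1.eval x + p2.eval x) / 2 := by
    intro x; simp [hp]; ring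
  have h12 := hm1 p2 hd2
  have h21 := hm2 p1 hd1
  have h1p := hm1 p hpd
  have hzero : ∀ x ∈ Set.Icc a b,
      |f x - p1.eval x| + |f x - p2.eval x| - 2 * |f x - p.eval x| ≤ 0 := by
    by_contra hcon
    push Not at hcon
    have := intervalIntegral.integral_pos (a := a) (b := b)
      (f := fun x => |f x - p1.eval x| + |f x - p2.eval x| - 2 * |f x - p.eval x|) hab
      (((hc p1).abs.add (hc p2).abs).sub (continuousOn_const.mul (hc p).abs))
      (fun x _ => by
        have := abs_add_le (f x - p1.eval x) (f x - p2.eval x)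
        rw [show f x - p1.eval x + (f x - p2.eval x) = 2 * (f x - p.eval x) by
          rw [hpe]; ring, abs_mul, abs_two] at this
        simpa using this) hcon
    rw [intervalIntegral.integral_sub ((hi p1).add (hi p2)) ((hi p).const_mul 2),
      intervalIntegral.integral_add (hi p1) (hi p2), intervalIntegral.integral_const_mul] at this
    linarith
  have hh : p1 - p2 ≠ 0 := sub_ne_zero.2 (Ne.symm hne)
  have hZ : ∀ x ∈ Set.Icc a b, f x - p.eval x = 0 → x ∈ (p1 - p2).roots.toFinset := by
    intro x hx h0
    have := hzero x hx
    rw [h0, abs_zero] at this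
    have e1 : f x - p1.eval x = 0 :=
      abs_nonpos_iff.1 (by linarith [abs_nonneg (f x - p2.eval x)])
    have e2 : f x - p2.eval x = 0 :=
      abs_nonpos_iff.1 (by linarith [abs_nonneg (f x - p1.eval x)])
    rw [Multiset.mem_toFinset, mem_roots hh, IsRoot.def, eval_sub]
    linarith
  obtain ⟨q, hq0, hqd, hqs⟩ := exists_sign_poly {x | x ∈ Set.Icc a b ∧ f x - p.eval x ≠ 0}
    (p1 - p2).roots.toFinset (fun x => f x - p.eval x) (by
      rintro x ⟨hx, hx0⟩ y ⟨hy, hy0⟩ hxy h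
      by_contra hcon
      have hlt : (f x - p.eval x) * (f y - p.eval y) < 0 :=
        lt_of_le_of_ne (not_lt.1 hcon) (mul_ne_zero hx0 hy0)
      have hsub : Set.uIcc x y ⊆ Set.Icc a b := by
        rw [Set.uIcc_of_le hxy]; exact Set.Icc_subset_Icc hx.1 hy.2
      have hivt := intermediate_value_uIcc ((hc p).mono hsub)
      have h0 : (0:ℝ) ∈ Set.uIcc (f x - p.eval x) (f y - p.eval y) := by
        rw [Set.mem_uIcc]
        rcases mul_neg_iff.1 hlt with h | h
        · exact Or.inr ⟨h.2.le, h.1.le⟩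
        · exact Or.inl ⟨h.1.le, h.2.le⟩
      obtain ⟨z, hz, hz0⟩ := hivt h0
      have hz0 : f z - p.eval z = 0 := hz0
      have hzZ := hZ z (hsub hz) hz0
      rw [Set.uIcc_of_le hxy] at hz
      refine h z hzZ (lt_of_le_of_ne hz.1 ?_) (lt_of_le_of_ne hz.2 ?_)
      · rintro rfl; exact hx0 hz0
      · rintro rfl; exact hy0 hz0)
  have hcard : (p1 - p2).roots.toFinset.card ≤ n :=
    (Multiset.toFinset_card_le _).trans ((card_roots' _).trans
      (natDegree_le_iff_degree_le.2 ((degree_sub_le _ _).trans (max_le hd1 hd2))))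
  have hqn : q.degree ≤ (n : ℕ) := natDegree_le_iff_degree_le.1 (hqd.trans hcard)
  refine exists_improve a b hab (fun x => f x - p.eval x) (hc p) _ hZ q hq0 ?_ ?_
  · intro x hx
    by_cases h : f x - p.eval x = 0
    · simp [h]
    · exact hqs x ⟨hx, h⟩
  · intro t
    have hmp : (∫ x in a..b, |f x - p.eval x|) ≤ ∫ x in a..b, |f x - p1.eval x| := by
      have := intervalIntegral.integral_mono_on hab.le ((hi p).const_mul 2)
        ((hi p1).add (hi p2)) (fun x _ => by
          have := abs_add_le (f x - p1.eval x) (f x - p2.eval x)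
          rw [show f x - p1.eval x + (f x - p2.eval x) = 2 * (f x - p.eval x) by
            rw [hpe]; ring, abs_mul, abs_two] at this
          exact this)
      rw [intervalIntegral.integral_add (hi p1) (hi p2),
        intervalIntegral.integral_const_mul] at this
      linarith
    refine hmp.trans ((hm1 (p + C t * q) ((degree_add_le _ _).trans
      (max_le hpd (hsm _ _ hqn)))).trans (le_of_eq ?_))
    congr 1
    ext x
    simp only [eval_add, eval_mul, eval_C]
    congr 1
    ring
end
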